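/- Let t_{n,k} = |T_{n,k}|. For all n ≥ 3 and all k with 2 ≤ k ≤ n, t_{n,k} = t_{n,k-1} + Σ_{i=k+1}^{n} t_{n-2,i-2}. -/

import Mathlib

/-!
Build an increasing tree by inserting its vertices in the order `1, 2, …, n`. The smallest child of
a vertex is the first one attached to it, so the current main-chain leaf `c` moves to the new vertex
exactly when the new vertex is attached to `c`. The number of ways to continue depends only on the
number `x` of leaves other than `c` and the number `b` of vertices with one child, and the state
`(c, x, b)` on `N` vertices moves to

* `(N + 1, x, b + 1)` in one way (attach to `c`),
* `(c, x, b + 1)` in `x` ways (attach to another leaf),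
* `(c, x + 1, b - 1)` in `b` ways (attach to a vertex with one child).

`stateSum n φ` is the sum of `φ c x b` over all states, with multiplicity, of trees on `n + 1`
vertices, defined by this transfer rule; `sum_trees` shows that it is the sum over actual trees.
`completions m a b` is the number of ways to insert `m` more vertices into a partial tree with `a`
available leaves and `b` available vertices with one child; forbidding the use of `c` just removes
`c` from the `a` leaves (`stateSum_add`). All three terms of the recurrence then become sums over
trees on `k - 2` vertices, and the recurrence reduces to the identity
`completions m a (b + 2) + completions m a b = 2 * completions m (a + 1) b`
(`completions_identity`), proved by induction on `m`. The case `k = 2` is a direct computation.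
-/

/-- A permutation `π` of `Fin n` is (down-up) alternating:
`π₁ > π₂ < π₃ > π₄ < ⋯` (0-indexed: `π 0 > π 1 < π 2 > ⋯`). -/
def IsAltPerm (n : ℕ) (π : Equiv.Perm (Fin n)) : Prop :=
  ∀ i : ℕ, ∀ h : i + 1 < n,
    if i % 2 = 0 then π ⟨i + 1, h⟩ < π ⟨i, Nat.lt_of_succ_lt h⟩
    else π ⟨i, Nat.lt_of_succ_lt h⟩ < π ⟨i + 1, h⟩

/-- The first entry of a permutation of `[n]`, as a 1-based value in `[n]`. -/
def firstEntry {n : ℕ} (π : Equiv.Perm (Fin n)) : ℕ :=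
  if h : 0 < n then (π ⟨0, h⟩ : ℕ) + 1 else 0

/-- `f` encodes a 0-1-2 increasing tree on `[n]` (vertices `0,…,n-1` standing for
`1,…,n`): the root `0` is a fixed point of `f`, every non-root vertex has a strictly
smaller parent, and every vertex has at most two children. -/
def IsIncTree (n : ℕ) (f : Fin n → Fin n) : Prop :=
  (∀ i : Fin n, (i : ℕ) = 0 → f i = i) ∧
  (∀ i : Fin n, (i : ℕ) ≠ 0 → (f i : ℕ) < (i : ℕ)) ∧
  (∀ j : Fin n,
    (Finset.univ.filter fun i : Fin n => (i : ℕ) ≠ 0 ∧ f i = j).card ≤ 2)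

/-- One step along the main chain: move from `j` to its smallest child
(if `j` has any child), otherwise stay at `j`. -/
def mcStep (n : ℕ) (f : Fin n → Fin n) (j : Fin n) : Fin n :=
  let s := Finset.univ.filter fun i : Fin n => (i : ℕ) ≠ 0 ∧ f i = j ∧ j < i
  if h : s.Nonempty then s.min' h else j

/-- The main-chain leaf `p(T)` of the increasing tree encoded by `f`, as a
1-based value in `[n]`: start at the root and repeatedly move to the smallest
child until reaching a leaf. -/
def mcLeafVal {n : ℕ} (f : Fin n → Fin n) : ℕ :=
  if h : 0 < n then (((mcStep n f)^[n]) ⟨0, h⟩ : ℕ) + 1 else 0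

/-- `t_{n,k} = |T_{n,k}|`. -/
noncomputable def treeT (n k : ℕ) : ℕ :=
  Nat.card {f : Fin n → Fin n // IsIncTree n f ∧ mcLeafVal f = k}

/-! ### The transfer rule -/

/-- The number of ways to attach `m` further vertices, one at a time, to a partial tree with `a`
available leaves and `b` available vertices with exactly one child. -/
def completions : ℕ → ℕ → ℕ → ℕ
  | 0, _, _ => 1
  | m + 1, a, b => a * completions m a (b + 1) + b * completions m (a + 1) (b - 1)

/-- The sum of `φ c x b` over the increasing trees on `n + 1` vertices, computed by the transfer
rule, where `c` is the main-chain leaf (1-based), `x` the number of other leaves and `b` the number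
of vertices with one child. -/
def stateSum : ℕ → (ℕ → ℕ → ℕ → ℕ) → ℕ
  | 0, φ => φ 1 0 0
  | n + 1, φ => stateSum n fun c x b =>
      φ (n + 2) x (b + 1) + x * φ c x (b + 1) + b * φ c (x + 1) (b - 1)

lemma completions_identity (m a b : ℕ) :
    completions m a (b + 2) + completions m a b = 2 * completions m (a + 1) b := by
  induction m generalizing a b with
  | zero => rfl
  | succ m ih =>
    have h1 := ih a (b + 1)
    rcases b with _ | b
    · simp only [completions] at h1 ⊢
      simp only [Nat.zero_add, Nat.add_one_sub_one, Nat.zero_mul, Nat.reduceAdd,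
        Nat.reduceSub] at h1 ⊢
      linear_combination a * h1
    · have h2 := ih (a + 1) b
      simp only [completions, Nat.add_one_sub_one] at h1 ⊢
      rw [show b + 1 + 2 + 1 = b + 1 + 1 + 2 by omega]
      linear_combination a * h1 + (b + 1) * h2

/-- The main-chain leaf of a tree on `n + 1` vertices has label at most `n + 1`, so only such
values of `c` matter. -/
lemma stateSum_congr (n : ℕ) (φ ψ : ℕ → ℕ → ℕ → ℕ)
    (h : ∀ c x b, 1 ≤ c → c ≤ n + 1 → φ c x b = ψ c x b) : stateSum n φ = stateSum n ψ := by
  induction n generalizing φ ψ with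
  | zero => exact h 1 0 0 le_rfl le_rfl
  | succ n ih =>
    apply ih
    intro c x b h1 h2
    rw [h _ _ _ (by omega) (by omega), h c _ _ h1 (by omega), h c _ _ h1 (by omega)]

lemma stateSum_add_fun (n : ℕ) (φ ψ : ℕ → ℕ → ℕ → ℕ) :
    stateSum n (fun c x b => φ c x b + ψ c x b) = stateSum n φ + stateSum n ψ := by
  induction n generalizing φ ψ with
  | zero => rfl
  | succ n ih =>
    simp only [stateSum]
    rw [← ih]
    congr 1
    funext c x b
    ring

lemma stateSum_sum_fun {ι : Type*} (n : ℕ) (s : Finset ι) (φ : ι → ℕ → ℕ → ℕ → ℕ) :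
    ∑ i ∈ s, stateSum n (φ i) = stateSum n (fun c x b => ∑ i ∈ s, φ i c x b) := by
  classical
  induction s using Finset.induction_on with
  | empty =>
    simp only [Finset.sum_empty]
    induction n with
    | zero => rfl
    | succ n ih => simpa [stateSum] using ih
  | insert i s hi ih => simp only [Finset.sum_insert hi, ih, stateSum_add_fun]

lemma stateSum_total (j m : ℕ) :
    stateSum (j + m) (fun _ _ _ => 1) = stateSum j (fun _ x b => completions m (x + 1) b) := by
  suffices h : ∀ m l, stateSum (j + m) (fun _ x b => completions l (x + 1) b) =
      stateSum j (fun _ x b => completions (m + l) (x + 1) b) from h m 0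
  intro m
  induction m with
  | zero => intro l; simp
  | succ m ih =>
    intro l
    rw [← Nat.add_assoc, stateSum, show m + 1 + l = m + (l + 1) by omega, ← ih]
    congr 1
    funext c x b
    simp only [completions]
    ring

/-- Trees whose main-chain leaf satisfies `P`, where `P` holds only for labels present after
`j + 1` vertices: no later vertex may be attached to the main-chain leaf. -/
lemma stateSum_add (j m : ℕ) (P : ℕ → Prop) [DecidablePred P] (hP : ∀ c, j + 1 < c → ¬ P c) :
    stateSum (j + m) (fun c _ _ => if P c then 1 else 0) =
      stateSum j (fun c x b => if P c then completions m x b else 0) := by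
  suffices h : ∀ m l, stateSum (j + m) (fun c x b => if P c then completions l x b else 0) =
      stateSum j (fun c x b => if P c then completions (m + l) x b else 0) from h m 0
  intro m
  induction m with
  | zero => intro l; simp
  | succ m ih =>
    intro l
    rw [← Nat.add_assoc, stateSum, show m + 1 + l = m + (l + 1) by omega, ← ih]
    congr 1
    funext c x b
    rw [if_neg (hP _ (by omega))]
    by_cases h : P c <;> simp [h, completions]

/-- The main-chain leaf is `j + 2` exactly when vertex `j + 2` is attached to the main-chain leaf
of the tree on `j + 1` vertices and is never used afterwards. -/
lemma stateSum_eq (j m : ℕ) :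
    stateSum (j + 1 + m) (fun c _ _ => if c = j + 2 then 1 else 0) =
      stateSum j (fun _ x b => completions m x (b + 1)) := by
  rw [stateSum_add (j + 1) m (fun c => c = j + 2) (by intro c; omega), stateSum]
  apply stateSum_congr
  intro c x b _ h
  have : c ≠ j + 2 := by omega
  simp [this]

/-! ### Inserting the last vertex -/

section Trees

variable {n : ℕ}

/-- The number of children of `j`. -/
def numChildren (f : Fin n → Fin n) (j : Fin n) : ℕ :=
  (Finset.univ.filter fun i : Fin n => (i : ℕ) ≠ 0 ∧ f i = j).card

/-- The number of vertices with exactly `d` children. -/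
def numDeg (f : Fin n → Fin n) (d : ℕ) : ℕ := ∑ j, if numChildren f j = d then 1 else 0

/-- The increasing tree obtained by attaching a new largest vertex to `j`. -/
def extendTree (g : Fin n → Fin n) (j : Fin n) : Fin (n + 1) → Fin (n + 1) :=
  Fin.snoc (α := fun _ => Fin (n + 1)) (fun i => (g i).castSucc) j.castSucc

/-- The main-chain leaf as a vertex. -/
def chainEnd (f : Fin (n + 1) → Fin (n + 1)) : Fin (n + 1) := (mcStep (n + 1) f)^[n + 1] 0

lemma mcLeafVal_eq (f : Fin (n + 1) → Fin (n + 1)) : mcLeafVal f = (chainEnd f : ℕ) + 1 := by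
  simp [mcLeafVal, chainEnd]

@[simp] lemma extendTree_castSucc (g : Fin n → Fin n) (j i : Fin n) :
    extendTree g j i.castSucc = (g i).castSucc := by
  simp [extendTree]

@[simp] lemma extendTree_last (g : Fin n → Fin n) (j : Fin n) :
    extendTree g j (Fin.last n) = j.castSucc := by
  simp [extendTree]

lemma numChildren_eq_sum (f : Fin n → Fin n) (j : Fin n) :
    numChildren f j = ∑ i : Fin n, if (i : ℕ) ≠ 0 ∧ f i = j then 1 else 0 := by
  rw [numChildren, Finset.card_filter]

lemma numChildren_extend (g : Fin (n + 1) → Fin (n + 1)) (j i : Fin (n + 1)) :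
    numChildren (extendTree g j) i.castSucc = numChildren g i + if j = i then 1 else 0 := by
  rw [numChildren_eq_sum, Fin.sum_univ_castSucc, numChildren_eq_sum]
  simp

lemma numChildren_extend_last (g : Fin n → Fin n) (j : Fin n) :
    numChildren (extendTree g j) (Fin.last n) = 0 := by
  rw [numChildren_eq_sum, Fin.sum_univ_castSucc]
  simp [Fin.castSucc_ne_last]

lemma isIncTree_extend (g : Fin (n + 1) → Fin (n + 1)) (j : Fin (n + 1)) :
    IsIncTree (n + 2) (extendTree g j) ↔ IsIncTree (n + 1) g ∧ numChildren g j ≤ 1 := by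
  have key : (∀ i, numChildren (extendTree g j) i ≤ 2) ↔
      (∀ i, numChildren g i ≤ 2) ∧ numChildren g j ≤ 1 := by
    rw [Fin.forall_fin_succ']
    simp only [numChildren_extend, numChildren_extend_last]
    constructor
    · rintro ⟨h, -⟩
      refine ⟨fun i => by have := h i; omega, ?_⟩
      have := h j
      simp at this
      omega
    · rintro ⟨h, h'⟩
      refine ⟨fun i => ?_, by omega⟩
      split_ifs with e
      · subst e; omega
      · exact h i
  change (_ ∧ _ ∧ ∀ i, numChildren (extendTree g j) i ≤ 2) ↔
    (_ ∧ _ ∧ ∀ i, numChildren g i ≤ 2) ∧ _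
  rw [key, Fin.forall_fin_succ' (P := fun i => (i : ℕ) = 0 → extendTree g j i = i),
    Fin.forall_fin_succ' (P := fun i => (i : ℕ) ≠ 0 → (extendTree g j i : ℕ) < i)]
  have hj : (j : ℕ) ≤ n := by omega
  simp [hj]
  tauto

lemma exists_extend (f : Fin (n + 2) → Fin (n + 2)) (hf : IsIncTree (n + 2) f) :
    ∃ g j, extendTree (n := n + 1) g j = f := by
  have h : ∀ i, (f i : ℕ) < n + 1 := by
    intro i
    by_cases h0 : (i : ℕ) = 0
    · rw [hf.1 i h0]; omega
    · have := hf.2.1 i h0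
      omega
  refine ⟨fun i => ⟨f i.castSucc, h _⟩, ⟨f (Fin.last _), h _⟩, ?_⟩
  funext i
  refine Fin.lastCases ?_ (fun i => ?_) i
  · rw [extendTree_last]; rfl
  · rw [extendTree_castSucc]; rfl

lemma extendTree_injective {g g' : Fin n → Fin n} {j j' : Fin n}
    (h : extendTree g j = extendTree g' j') : g = g' ∧ j = j' := by
  constructor
  · funext i
    have := congrFun h i.castSucc
    simpa using this
  · have := congrFun h (Fin.last n)
    simpa using this

/-- Inserting a vertex below `j` creates a leaf, and `j` stops being one if it was. -/
lemma numDeg_zero_extend (g : Fin (n + 1) → Fin (n + 1)) (j : Fin (n + 1)) :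
    numDeg (extendTree g j) 0 + (if numChildren g j = 0 then 1 else 0) = numDeg g 0 + 1 := by
  rw [numDeg, Fin.sum_univ_castSucc, numDeg, ← Finset.add_sum_erase _ _ (Finset.mem_univ j),
    ← Finset.add_sum_erase (a := j) _ (fun i => if numChildren g i = 0 then 1 else 0)
      (Finset.mem_univ j)]
  simp only [numChildren_extend, numChildren_extend_last]
  rw [Finset.sum_congr rfl (g := fun i => if numChildren g i = 0 then 1 else 0)
    (fun i hi => by simp [(Finset.ne_of_mem_erase hi).symm])]
  simp
  omega

lemma numDeg_one_extend (g : Fin (n + 1) → Fin (n + 1)) (j : Fin (n + 1)) :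
    numDeg (extendTree g j) 1 + (if numChildren g j = 1 then 1 else 0) =
      numDeg g 1 + (if numChildren g j = 0 then 1 else 0) := by
  rw [numDeg, Fin.sum_univ_castSucc, numDeg, ← Finset.add_sum_erase _ _ (Finset.mem_univ j),
    ← Finset.add_sum_erase (a := j) _ (fun i => if numChildren g i = 1 then 1 else 0)
      (Finset.mem_univ j)]
  simp only [numChildren_extend, numChildren_extend_last]
  rw [Finset.sum_congr rfl (g := fun i => if numChildren g i = 1 then 1 else 0)
    (fun i hi => by simp [(Finset.ne_of_mem_erase hi).symm])]
  simp
  omega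

/-! ### The main chain -/

lemma le_mcStep (f : Fin n → Fin n) (i : Fin n) : i ≤ mcStep n f i := by
  unfold mcStep
  dsimp only
  split_ifs with h
  · have := Finset.min'_mem _ h
    simp only [Finset.mem_filter] at this
    exact this.2.2.2.le
  · exact le_rfl

lemma mcStep_eq_self_iff (f : Fin n → Fin n) (hf : IsIncTree n f) (i : Fin n) :
    mcStep n f i = i ↔ numChildren f i = 0 := by
  have e : (Finset.univ.filter fun l : Fin n => (l : ℕ) ≠ 0 ∧ f l = i ∧ i < l) =
      Finset.univ.filter fun l : Fin n => (l : ℕ) ≠ 0 ∧ f l = i := by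
    ext l
    simp only [Finset.mem_filter, Finset.mem_univ, true_and]
    constructor
    · tauto
    · rintro ⟨h0, h⟩
      refine ⟨h0, h, ?_⟩
      have := hf.2.1 l h0
      rw [h] at this
      exact this
  rw [numChildren, ← e, Finset.card_eq_zero, ← Finset.not_nonempty_iff_eq_empty]
  unfold mcStep
  dsimp only
  split_ifs with h
  · have := Finset.min'_mem _ h
    simp only [Finset.mem_filter] at this
    simp only [h, not_true_eq_false, iff_false]
    exact this.2.2.2.ne'
  · simp [h]

/-- An inflationary self-map of `Fin n` gains at least one per step until it becomes stationary. -/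
lemma iterate_fixed_or_le (h : Fin n → Fin n) (hh : ∀ i, i ≤ h i) (z : Fin n) (m : ℕ) :
    h (h^[m] z) = h^[m] z ∨ m ≤ (h^[m] z : ℕ) := by
  induction m with
  | zero => right; omega
  | succ m ih =>
    rw [Function.iterate_succ_apply']
    by_cases e : h (h^[m] z) = h^[m] z
    · left; rw [e, e]
    · right
      have h1 := ih.resolve_left e
      have h2 : h^[m] z < h (h^[m] z) := lt_of_le_of_ne (hh _) (Ne.symm e)
      have h3 : (h^[m] z : ℕ) < (h (h^[m] z) : ℕ) := h2
      omega

lemma mcStep_chainEnd (f : Fin (n + 1) → Fin (n + 1)) :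
    mcStep (n + 1) f (chainEnd f) = chainEnd f := by
  rcases iterate_fixed_or_le (mcStep (n + 1) f) (le_mcStep f) 0 (n + 1) with h | h
  · exact h
  · have := ((mcStep (n + 1) f)^[n + 1] 0).isLt
    omega

lemma eq_chainEnd_of_fixed (f : Fin (n + 1) → Fin (n + 1)) (m : ℕ)
    (h : mcStep (n + 1) f ((mcStep (n + 1) f)^[m] 0) = (mcStep (n + 1) f)^[m] 0) :
    (mcStep (n + 1) f)^[m] 0 = chainEnd f := by
  rcases le_total m (n + 1) with hm | hm
  · obtain ⟨d, hd⟩ := Nat.exists_eq_add_of_le hm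
    have e : chainEnd f = (mcStep (n + 1) f)^[d + m] 0 := by
      rw [Nat.add_comm d m, ← hd, chainEnd]
    rw [e, Function.iterate_add_apply, Function.iterate_fixed h]
  · obtain ⟨d, hd⟩ := Nat.exists_eq_add_of_le hm
    rw [hd, Nat.add_comm _ d, Function.iterate_add_apply]
    exact Function.iterate_fixed (mcStep_chainEnd f) d

lemma mcStep_extend_last (g : Fin n → Fin n) (j : Fin n) :
    mcStep (n + 1) (extendTree g j) (Fin.last n) = Fin.last n :=
  le_antisymm (Fin.le_last _) (le_mcStep _ _)

/-- The new vertex, being largest, is a smallest child only of a former leaf. -/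
lemma mcStep_extend (g : Fin (n + 1) → Fin (n + 1)) (j i : Fin (n + 1))
    (hi : ¬ (mcStep (n + 1) g i = i ∧ i = j)) :
    mcStep (n + 2) (extendTree g j) i.castSucc = (mcStep (n + 1) g i).castSucc := by
  by_cases hs : (Finset.univ.filter fun l : Fin (n + 1) =>
      (l : ℕ) ≠ 0 ∧ g l = i ∧ i < l).Nonempty
  · have hmin := Finset.min'_mem _ hs
    have hle : ∀ l, l ∈ (Finset.univ.filter fun l : Fin (n + 1) =>
        (l : ℕ) ≠ 0 ∧ g l = i ∧ i < l) → Finset.min' _ hs ≤ l :=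
      fun l hl => Finset.min'_le _ l hl
    have e : mcStep (n + 1) g i = Finset.min' _ hs := by
      unfold mcStep; dsimp only; rw [dif_pos hs]
    rw [e]
    generalize Finset.min' _ hs = p at hmin hle ⊢
    simp only [Finset.mem_filter, Finset.mem_univ, true_and] at hmin hle
    have hmem : p.castSucc ∈ Finset.univ.filter fun l : Fin (n + 2) =>
        (l : ℕ) ≠ 0 ∧ extendTree g j l = i.castSucc ∧ i.castSucc < l := by
      simpa using hmin
    unfold mcStep
    dsimp only
    rw [dif_pos ⟨_, hmem⟩]
    refine le_antisymm (Finset.min'_le _ _ hmem) (Finset.le_min' _ _ _ ?_)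
    intro l hl
    refine Fin.lastCases (fun _ => Fin.le_last _) (fun l hl => ?_) l hl
    simp at hl
    have := hle l (by simpa using hl)
    simpa using this
  · have e : mcStep (n + 1) g i = i := by
      unfold mcStep; dsimp only; rw [dif_neg hs]
    have hij : j ≠ i := fun h => hi ⟨e, h.symm⟩
    rw [e]
    unfold mcStep
    dsimp only
    rw [dif_neg]
    rintro ⟨l, hl⟩
    revert hl
    refine Fin.lastCases (fun hl => ?_) (fun l hl => ?_) l
    · simp [hij] at hl
    · exact hs ⟨l, by simpa using hl⟩

lemma mcStep_extend_leaf (g : Fin (n + 1) → Fin (n + 1)) (j : Fin (n + 1))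
    (hf : IsIncTree (n + 1) g) (hj : numChildren g j ≤ 1) :
    mcStep (n + 2) (extendTree g j) j.castSucc ≠ j.castSucc := by
  rw [Ne, mcStep_eq_self_iff _ ((isIncTree_extend g j).2 ⟨hf, hj⟩), numChildren_extend]
  simp

lemma mcStep_extend_eq_last (g : Fin (n + 1) → Fin (n + 1)) (j : Fin (n + 1))
    (hj : numChildren g j = 0) :
    mcStep (n + 2) (extendTree g j) j.castSucc = Fin.last _ := by
  have h : (Finset.univ.filter fun l : Fin (n + 2) =>
      (l : ℕ) ≠ 0 ∧ extendTree g j l = j.castSucc ∧ j.castSucc < l).Nonempty :=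
    ⟨Fin.last _, by simp [Fin.castSucc_lt_last]⟩
  unfold mcStep
  dsimp only
  rw [dif_pos h]
  have hm := Finset.min'_mem _ h
  generalize Finset.min' _ h = p at hm ⊢
  revert hm
  refine Fin.lastCases (fun _ => rfl) (fun l hl => ?_) p
  exfalso
  simp only [numChildren, Finset.card_eq_zero] at hj
  have : l ∈ Finset.univ.filter fun i : Fin (n + 1) => (i : ℕ) ≠ 0 ∧ g i = j := by
    simp at hl ⊢
    tauto
  rw [hj] at this
  simp at this

/-- The main-chain leaf moves to the new vertex exactly when the latter is attached to it. -/
lemma chainEnd_extend (g : Fin (n + 1) → Fin (n + 1)) (j : Fin (n + 1))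
    (hf : IsIncTree (n + 1) g) (hj : numChildren g j ≤ 1) :
    chainEnd (extendTree g j) =
      if j = chainEnd g then Fin.last (n + 1) else (chainEnd g).castSucc := by
  have inv : ∀ m, (mcStep (n + 2) (extendTree g j))^[m] 0 =
        ((mcStep (n + 1) g)^[m] 0).castSucc ∨
      ((mcStep (n + 2) (extendTree g j))^[m] 0 = Fin.last _ ∧ j = chainEnd g) := by
    intro m
    induction m with
    | zero => left; rfl
    | succ m ih =>
      rw [Function.iterate_succ_apply', Function.iterate_succ_apply']
      rcases ih with h | ⟨h, h'⟩
      · rw [h]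
        by_cases hc : mcStep (n + 1) g ((mcStep (n + 1) g)^[m] 0) = (mcStep (n + 1) g)^[m] 0 ∧
            (mcStep (n + 1) g)^[m] 0 = j
        · right
          have e := eq_chainEnd_of_fixed g m hc.1
          have h0 := (mcStep_eq_self_iff g hf _).1 hc.1
          rw [hc.2] at e h0 ⊢
          exact ⟨mcStep_extend_eq_last g j h0, e⟩
        · left
          exact mcStep_extend g j _ hc
      · right
        rw [h, mcStep_extend_last]
        exact ⟨rfl, h'⟩
  have hlast : (mcStep (n + 1) g)^[n + 2] 0 = chainEnd g := by
    rw [Function.iterate_succ_apply']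
    exact mcStep_chainEnd g
  have h := inv (n + 2)
  rw [hlast] at h
  split_ifs with hc
  · rcases h with h | h
    · -- the chain cannot stop at `j`, which now has a child
      exfalso
      have h2 := mcStep_chainEnd (extendTree g j)
      rw [chainEnd, h, ← hc] at h2
      exact mcStep_extend_leaf g j hf hj h2
    · exact h.1
  · rcases h with h | h
    · exact h
    · exact absurd h.2 hc

/-! ### Sums over trees -/

open Classical in
/-- The set of increasing trees on `n` vertices. -/
noncomputable def trees (n : ℕ) : Finset (Fin n → Fin n) := Finset.univ.filter (IsIncTree n)

open Classical in
lemma treeT_eq_sum (n k : ℕ) :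
    treeT n k = ∑ f ∈ trees n, if mcLeafVal f = k then 1 else 0 := by
  rw [treeT, Nat.card_eq_fintype_card, Fintype.card_subtype, trees, ← Finset.card_filter,
    Finset.filter_filter]

lemma sum_trees_succ (n : ℕ) (Φ : (Fin (n + 2) → Fin (n + 2)) → ℕ) :
    ∑ f ∈ trees (n + 2), Φ f = ∑ g ∈ trees (n + 1),
      ∑ j ∈ Finset.univ.filter (fun j => numChildren g j ≤ 1), Φ (extendTree g j) := by
  rw [Finset.sum_sigma']
  symm
  refine Finset.sum_bij (fun p _ => extendTree p.1 p.2) ?_ ?_ ?_ ?_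
  · rintro ⟨g, j⟩ h
    simp only [trees, Finset.mem_sigma, Finset.mem_filter, Finset.mem_univ, true_and] at h ⊢
    exact (isIncTree_extend g j).2 h
  · rintro ⟨g, j⟩ _ ⟨g', j'⟩ _ h
    obtain ⟨rfl, rfl⟩ := extendTree_injective h
    rfl
  · intro f hf
    simp only [trees, Finset.mem_filter, Finset.mem_univ, true_and] at hf
    obtain ⟨g, j, rfl⟩ := exists_extend f hf
    refine ⟨⟨g, j⟩, ?_, rfl⟩
    simp only [trees, Finset.mem_sigma, Finset.mem_filter, Finset.mem_univ, true_and]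
    exact (isIncTree_extend g j).1 hf
  · intros; rfl

/-- The transfer rule computes sums over increasing trees. -/
lemma sum_trees (n : ℕ) (φ : ℕ → ℕ → ℕ → ℕ) :
    ∑ f ∈ trees (n + 1), φ (mcLeafVal f) (numDeg f 0 - 1) (numDeg f 1) = stateSum n φ := by
  induction n generalizing φ with
  | zero =>
    have h : trees 1 = {id} := by
      ext f
      have hfi : f = id := Subsingleton.elim _ _
      subst hfi
      simp only [trees, Finset.mem_filter, Finset.mem_univ, true_and, Finset.mem_singleton,
        iff_true]
      refine ⟨fun _ _ => rfl, fun i hi => absurd (by omega) hi, fun j => ?_⟩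
      simp
    rw [h, Finset.sum_singleton, mcLeafVal_eq]
    simp [numDeg, numChildren, stateSum]
  | succ n ih =>
    rw [sum_trees_succ, stateSum, ← ih]
    refine Finset.sum_congr rfl fun g hg => ?_
    simp only [trees, Finset.mem_filter, Finset.mem_univ, true_and] at hg
    have hE : numChildren g (chainEnd g) = 0 :=
      (mcStep_eq_self_iff g hg _).1 (mcStep_chainEnd g)
    have ha : numDeg g 0 = 1 + ∑ j ∈ Finset.univ.erase (chainEnd g),
        if numChildren g j = 0 then 1 else 0 := by
      rw [numDeg, ← Finset.add_sum_erase _ _ (Finset.mem_univ (chainEnd g)), if_pos hE]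
    have hb : numDeg g 1 = ∑ j ∈ Finset.univ.erase (chainEnd g),
        if numChildren g j = 1 then 1 else 0 := by
      rw [numDeg, ← Finset.add_sum_erase _ _ (Finset.mem_univ (chainEnd g)), if_neg (by omega)]
      simp
    have ha' : numDeg g 0 - 1 = ∑ j ∈ Finset.univ.erase (chainEnd g),
        if numChildren g j = 0 then 1 else 0 := by omega
    rw [Finset.sum_filter, ← Finset.add_sum_erase _ _ (Finset.mem_univ (chainEnd g)),
      if_pos (by omega), Nat.add_assoc (φ _ _ _)]
    congr 1
    · have h0 := numDeg_zero_extend g (chainEnd g)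
      have h1 := numDeg_one_extend g (chainEnd g)
      simp only [hE, if_true] at h0 h1
      rw [mcLeafVal_eq, chainEnd_extend g _ hg (by omega), if_pos rfl]
      rw [show numDeg (extendTree g (chainEnd g)) 0 = numDeg g 0 by omega]
      rw [show numDeg (extendTree g (chainEnd g)) 1 = numDeg g 1 + 1 by simpa using h1]
      rfl
    · -- only the multiplicities are to be expanded as sums, not the arguments of `φ`
      generalize hA : φ (mcLeafVal g) (numDeg g 0 - 1) (numDeg g 1 + 1) = A
      generalize hB : φ (mcLeafVal g) (numDeg g 0 - 1 + 1) (numDeg g 1 - 1) = B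
      rw [ha', hb, Finset.sum_mul, Finset.sum_mul, ← Finset.sum_add_distrib]
      refine Finset.sum_congr rfl fun j hj => ?_
      have hne := Finset.ne_of_mem_erase hj
      have h0 := numDeg_zero_extend g j
      have h1 := numDeg_one_extend g j
      by_cases hj1 : numChildren g j ≤ 1
      · have hv : mcLeafVal (extendTree g j) = mcLeafVal g := by
          rw [mcLeafVal_eq, chainEnd_extend g j hg hj1, if_neg hne, mcLeafVal_eq]
          rfl
        rw [if_pos hj1, hv]
        rcases Nat.le_one_iff_eq_zero_or_eq_one.1 hj1 with hz | hz
        · simp only [hz, if_true] at h0 h1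
          rw [show numDeg (extendTree g j) 0 = numDeg g 0 by omega,
            show numDeg (extendTree g j) 1 = numDeg g 1 + 1 by simpa using h1, hA]
          simp [hz]
        · simp only [hz] at h0 h1
          simp at h0 h1
          rw [show numDeg (extendTree g j) 0 - 1 = numDeg g 0 - 1 + 1 by omega,
            show numDeg (extendTree g j) 1 = numDeg g 1 - 1 by omega, hB]
          simp [hz]
      · rw [if_neg hj1, if_neg (by omega), if_neg (by omega)]
        simp

end Trees

lemma treeT_eq_stateSum (n k : ℕ) :
    treeT (n + 1) k = stateSum n (fun c _ _ => if c = k then 1 else 0) := by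
  rw [treeT_eq_sum, ← sum_trees]

/-- The sum in the recurrence counts the trees whose main-chain leaf is greater than `j`. -/
lemma sum_treeT (n j : ℕ) :
    ∑ i ∈ Finset.Icc (j + 3) (n + 3), treeT (n + 1) (i - 2) =
      stateSum n (fun c _ _ => if c ≤ j then 0 else 1) := by
  simp only [treeT_eq_stateSum]
  rw [stateSum_sum_fun]
  apply stateSum_congr
  intro c _ _ _ hc
  rw [Finset.sum_congr rfl (g := fun i => if c + 2 = i then 1 else 0)]
  · rw [Finset.sum_ite_eq]
    simp only [Finset.mem_Icc]
    split_ifs <;> omega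
  · intro i hi
    simp only [Finset.mem_Icc] at hi
    congr 1
    apply propext
    omega

/-- For `n ≥ 3` and `2 ≤ k ≤ n`, `t_{n,k} = t_{n,k-1} + Σ_{i=k+1}^n t_{n-2,i-2}`. -/
theorem treeT_recurrence (n k : ℕ) (hn : 3 ≤ n) (hk2 : 2 ≤ k) (hkn : k ≤ n) :
    treeT n k = treeT n (k - 1) + ∑ i ∈ Finset.Icc (k + 1) n, treeT (n - 2) (i - 2) := by
  obtain ⟨N, rfl⟩ := Nat.exists_eq_add_of_le' hn
  obtain ⟨j, rfl⟩ := Nat.exists_eq_add_of_le' hk2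
  rw [show N + 3 - 2 = N + 1 by omega, show j + 2 + 1 = j + 3 by omega, sum_treeT,
    treeT_eq_stateSum (N + 2), treeT_eq_stateSum (N + 2), show j + 2 - 1 = j + 1 by omega]
  rcases j with _ | j
  · have h1 := stateSum_eq 0 (N + 1)
    have h2 := stateSum_add 0 (N + 2) (fun c => c = 1) (by intro c; omega)
    have h3 := stateSum_total 0 N
    have h4 : stateSum N (fun c _ _ => if c ≤ 0 then 0 else 1) =
        stateSum N (fun _ _ _ => 1) :=
      stateSum_congr _ _ _ fun c _ _ hc _ => by rw [if_neg (by omega)]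
    simp only [Nat.zero_add] at h1 h2 h3 ⊢
    rw [show N + 2 = 1 + (N + 1) by omega, h1, show 1 + (N + 1) = N + 2 by omega, h2, h4, h3]
    simp [stateSum, completions]
  · obtain ⟨m, rfl⟩ := Nat.exists_eq_add_of_le (show j ≤ N by omega)
    have h1 := stateSum_eq (j + 1) m
    have h2 := stateSum_eq j (m + 1)
    have h3 := stateSum_total j m
    have h4 := stateSum_add j m (fun c => c ≤ j + 1) (by intro c; omega)
    have h5 : stateSum (j + m) (fun c _ _ => if c ≤ j + 1 then 0 else 1) +
        stateSum (j + m) (fun c _ _ => if c ≤ j + 1 then 1 else 0) =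
        stateSum (j + m) (fun _ _ _ => 1) := by
      rw [← stateSum_add_fun]
      congr 1
      funext c _ _
      split_ifs <;> rfl
    have h6 : stateSum j (fun c x b => if c ≤ j + 1 then completions m x b else 0) =
        stateSum j (fun _ x b => completions m x b) :=
      stateSum_congr _ _ _ fun c _ _ _ hc => by rw [if_pos hc]
    rw [show j + 1 + 1 + m = j + m + 2 by omega] at h1
    rw [show j + 1 + (m + 1) = j + m + 2 by omega] at h2
    rw [h4, h6, h3] at h5
    rw [h1, h2]
    -- after adding the trees whose main-chain leaf is at most `j + 1`, every term is a sum over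
    -- trees on `j + 1` vertices, and the summands agree
    apply Nat.add_right_cancel (m := stateSum j (fun _ x b => completions m x b))
    rw [Nat.add_assoc, h5, stateSum, ← stateSum_add_fun, ← stateSum_add_fun]
    congr 1
    funext c x b
    have hid := completions_identity m x b
    rcases b with _ | b
    · simp only [completions, Nat.zero_add, Nat.add_one_sub_one] at hid ⊢
      linear_combination hid
    · simp only [completions, Nat.add_one_sub_one] at hid ⊢
      linear_combination hid
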